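/- arXiv:1605.06775 — 2 statements merged into one kernel-verified Lean document; each statement's English description precedes it below -/
import Mathlib

section
/- Let α ∈ (0,1), T > 0, b > 0, let s : [0,T] → ℝ be absolutely continuous with s(0) = b, ṡ ≥ 0, and t ↦ t^{1−α} ṡ(t) continuous on [0,T], and let m ∈ ℕ. If v ∈ C([0,T]; ℝ^{m+1}), then the function g₁(τ) = ∫₀^τ (τ−p)^{−α} D̃(p,τ) v(p) dp has an absolutely continuous representative: there exists g̃₁ ∈ AC([0,T]; ℝ^{m+1}) with g̃₁(0) = 0 and g₁ = g̃₁ almost everywhere on [0,T]. -/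
open MeasureTheory Set Filter
open scoped Topology

/-- Eigenvalues `λ_n(t) = (π / s(t)) (n + 1/2)`. -/
noncomputable def lam (s : ℝ → ℝ) (n : ℕ) (t : ℝ) : ℝ :=
  Real.pi / s t * (n + 1 / 2)

/-- Eigenfunctions `φ_n(x,t) = √(2/s(t)) cos(λ_n(t) x)`. -/
noncomputable def phi (s : ℝ → ℝ) (n : ℕ) (x t : ℝ) : ℝ :=
  Real.sqrt (2 / s t) * Real.cos (lam s n t * x)

/-- `D̃(τ,t)_{n,k} = ∫₀^{s(τ)} ∂_τ φ_n(x,τ)[φ_k(x,t) − φ_k(x,τ)] dx`. -/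
noncomputable def Dtil (s : ℝ → ℝ) (m : ℕ) (τ t : ℝ) :
    Matrix (Fin (m + 1)) (Fin (m + 1)) ℝ :=
  Matrix.of fun n k : Fin (m + 1) =>
    ∫ x in (0:ℝ)..(s τ), deriv (fun r => phi s n x r) τ * (phi s k x t - phi s k x τ)

/-!
Scaling space by `s(p)` gives `D̃(p,τ) = (ṡ(p) / s(p)) B(s(τ) / s(p))`, where `B` is the matrix `D̃`
of the domain function `s = id` at `p = 1`; it is `C¹` on `(0, ∞)` and `B(1) = 0`. So
`K(p,τ) = D̃(p,τ) v(p)` vanishes for `τ = p`, and `∂_τ K = O(p^(α-1) τ^(α-1))` because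
`ṡ(t) = O(t^(α-1))`. Integrating from the diagonal, `∂_r [(r-p)^(-α) K(p,r)]` is
`O(p^(α-1) (r-p)^(-α) r^(α-1))`, which is integrable on the triangle `0 < p < r < T`. The
fundamental theorem of calculus in `r` and Fubini's theorem then exhibit `g₁` as the primitive of
the integrable function `r ↦ ∫₀^r ∂_r [(r-p)^(-α) K(p,r)] dp`.
-/

section PowerBounds

lemma rpow_neg_add_le_mul_rpow_neg {x y a b : ℝ} (hx : 0 < x) (hy : 0 < y) (ha : 0 ≤ a)
    (hb : 0 ≤ b) : (x + y) ^ (-(a + b)) ≤ x ^ (-a) * y ^ (-b) := by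
  rw [neg_add, Real.rpow_add (add_pos hx hy)]
  gcongr ?_ * ?_
  · exact Real.rpow_le_rpow_of_nonpos hx (le_add_of_nonneg_right hy.le) (neg_nonpos.2 ha)
  · exact Real.rpow_le_rpow_of_nonpos hy (le_add_of_nonneg_left hx.le) (neg_nonpos.2 hb)

lemma rpow_sub_rpow_le_rpow_sub_one_mul_sub {α p r : ℝ} (hα : α ≤ 1) (hp : 0 < p) (hpr : p ≤ r) :
    r ^ α - p ^ α ≤ r ^ (α - 1) * (r - p) := by
  have rpow_eq {x : ℝ} (hx : 0 < x) : x ^ α = x ^ (α - 1) * x := by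
    rw [← Real.rpow_add_one hx.ne', sub_add_cancel]
  have hanti : r ^ (α - 1) ≤ p ^ (α - 1) :=
    Real.rpow_le_rpow_of_nonpos hp hpr (sub_nonpos.2 hα)
  rw [rpow_eq hp, rpow_eq (hp.trans_le hpr), mul_sub]
  gcongr

lemma norm_le_of_norm_deriv_le_rpow {E : Type*} [NormedAddCommGroup E] [NormedSpace ℝ E]
    {α p T C : ℝ} {f f' : ℝ → E} (hα : α ∈ Ioc 0 1) (hp : 0 < p) (hC : 0 ≤ C)
    (hfp : f p = 0) (hf : ContinuousOn f (Icc p T)) (hf' : ∀ r ∈ Ico p T, HasDerivAt f (f' r) r)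
    (hbound : ∀ r ∈ Ico p T, ‖f' r‖ ≤ C * r ^ (α - 1)) {r : ℝ} (hr : r ∈ Icc p T) :
    ‖f r‖ ≤ C / α * (r ^ (α - 1) * (r - p)) := by
  have hprimitive {x : ℝ} (hx : 0 < x) :
      HasDerivAt (fun x => C / α * (x ^ α - p ^ α)) (C * x ^ (α - 1)) x := by
    refine (((Real.hasDerivAt_rpow_const (Or.inl hx.ne')).sub_const (p ^ α)).const_mul
      (C / α)).congr_deriv ?_
    rw [← mul_assoc, div_mul_cancel₀ _ hα.1.ne']
  calc ‖f r‖ ≤ C / α * (r ^ α - p ^ α) :=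
        image_norm_le_of_norm_deriv_right_le_deriv_boundary' hf
          (fun x hx => (hf' x hx).hasDerivWithinAt) (by simp [hfp])
          (fun x hx => (hprimitive (hp.trans_le hx.1)).continuousAt.continuousWithinAt)
          (fun x hx => (hprimitive (hp.trans_le hx.1)).hasDerivWithinAt) hbound hr
    _ ≤ C / α * (r ^ (α - 1) * (r - p)) := by
        have := hα.1
        gcongr
        exact rpow_sub_rpow_le_rpow_sub_one_mul_sub hα.2 hp hr.1

end PowerBounds

/-- The open triangle `0 < p < r < T`, as a set of pairs `(p, r)`: the domain of a Volterra kernel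
on `(0, T)`. -/
def openTriangle (T : ℝ) : Set (ℝ × ℝ) := {z | 0 < z.1 ∧ z.1 < z.2 ∧ z.2 < T}

namespace openTriangle

variable {E : Type*} [NormedAddCommGroup E] {f : ℝ → ℝ → E} {p r τ T a b α : ℝ}

lemma isOpen (T : ℝ) : IsOpen (openTriangle T) :=
  (isOpen_lt continuous_const continuous_fst).inter
    ((isOpen_lt continuous_fst continuous_snd).inter (isOpen_lt continuous_snd continuous_const))

lemma measurableSet (T : ℝ) : MeasurableSet (openTriangle T) := (isOpen T).measurableSet

lemma mono (h : τ ≤ T) : openTriangle τ ⊆ openTriangle T :=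
  fun _ hz => ⟨hz.1, hz.2.1, hz.2.2.trans_le h⟩

lemma preimage_mk_left (hp : 0 < p) : (fun r => (p, r)) ⁻¹' openTriangle T = Ioo p T := by
  ext r
  simp [openTriangle, hp]

lemma preimage_mk_right (hr : r < T) : (fun p => (p, r)) ⁻¹' openTriangle T = Ioo 0 r := by
  ext p
  simp [openTriangle, hr]

lemma ae_intervalIntegrable (hf : IntegrableOn (Function.uncurry f) (openTriangle T)) :
    ∀ᵐ p, p ∈ Ioo 0 T → IntervalIntegrable (f p) volume p T := by
  rw [← integrable_indicator_iff (measurableSet T)] at hf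
  filter_upwards [hf.prod_right_ae] with p hp hpT
  rw [intervalIntegrable_iff_integrableOn_Ioo_of_le hpT.2.le,
    ← integrable_indicator_iff measurableSet_Ioo, ← preimage_mk_left hpT.1]
  exact hp

variable [NormedSpace ℝ E]

lemma integral_indicator_left (f : ℝ → ℝ → E) (hp : p ∈ Ioo 0 T) :
    ∫ r, (openTriangle T).indicator (Function.uncurry f) (p, r) = ∫ r in p..T, f p r := by
  rw [intervalIntegral.integral_of_le hp.2.le, integral_Ioc_eq_integral_Ioo,
    ← integral_indicator measurableSet_Ioo, ← preimage_mk_left hp.1]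
  rfl

lemma integral_indicator_right (f : ℝ → ℝ → E) (hr : r ∈ Ioo 0 T) :
    ∫ p, (openTriangle T).indicator (Function.uncurry f) (p, r) = ∫ p in (0 : ℝ)..r, f p r := by
  rw [intervalIntegral.integral_of_le hr.1.le, integral_Ioc_eq_integral_Ioo,
    ← integral_indicator measurableSet_Ioo, ← preimage_mk_right hr.2]
  rfl

lemma integrableOn_integral (hf : IntegrableOn (Function.uncurry f) (openTriangle T)) :
    IntegrableOn (fun r => ∫ p in (0 : ℝ)..r, f p r) (Icc 0 T) := by
  rw [← integrable_indicator_iff (measurableSet T)] at hf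
  rw [integrableOn_Icc_iff_integrableOn_Ioo]
  exact hf.integral_prod_right.integrableOn.congr_fun
    (fun r hr => integral_indicator_right f hr) measurableSet_Ioo

lemma integral_integral_swap (hT : 0 ≤ T)
    (hf : IntegrableOn (Function.uncurry f) (openTriangle T)) :
    ∫ p in (0 : ℝ)..T, ∫ r in p..T, f p r = ∫ r in (0 : ℝ)..T, ∫ p in (0 : ℝ)..r, f p r := by
  rw [← integrable_indicator_iff (measurableSet T)] at hf
  simp only [intervalIntegral.integral_of_le hT, integral_Ioc_eq_integral_Ioo]
  rw [← setIntegral_congr_fun measurableSet_Ioo fun p hp => integral_indicator_left f hp,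
    ← setIntegral_congr_fun measurableSet_Ioo fun r hr => integral_indicator_right f hr,
    setIntegral_eq_integral_of_forall_compl_eq_zero,
    setIntegral_eq_integral_of_forall_compl_eq_zero,
    MeasureTheory.integral_integral_swap
      (f := fun p r => (openTriangle T).indicator (Function.uncurry f) (p, r)) hf]
  · exact fun r hr => integral_eq_zero_of_ae <| .of_forall fun p =>
      indicator_of_notMem (fun hz => hr ⟨hz.1.trans hz.2.1, hz.2.2⟩) _
  · exact fun p hp => integral_eq_zero_of_ae <| .of_forall fun r =>
      indicator_of_notMem (fun hz => hp ⟨hz.1, hz.2.1.trans hz.2.2⟩) _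

lemma integrableOn_rpow_mul_sub_rpow (ha : -1 < a) (hb : -1 < b) :
    IntegrableOn (fun z : ℝ × ℝ => z.1 ^ a * (z.2 - z.1) ^ b) (openTriangle T) := by
  have integrable_rpow {c : ℝ} (hc : -1 < c) :
      Integrable ((Ioc 0 T).indicator fun x : ℝ => x ^ c) :=
    (integrable_indicator_iff measurableSet_Ioc).2
      (intervalIntegral.intervalIntegrable_rpow' hc).1
  have hconv := ((integrable_rpow ha).convolution_integrand (.mul ℝ ℝ) (integrable_rpow hb)).swap
  refine hconv.integrableOn.congr_fun (fun z hz => ?_) (measurableSet T)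
  have h₁ : z.1 ∈ Ioc 0 T := ⟨hz.1, (hz.2.1.trans hz.2.2).le⟩
  have h₂ : z.2 - z.1 ∈ Ioc 0 T := ⟨sub_pos.2 hz.2.1, by linarith [hz.1, hz.2.2]⟩
  simp [h₁, h₂]

/- The three exponents add up to `α - 2 > -2`, so part of the singularity at `r = 0` can be moved
onto each of the other two factors. -/
lemma integrableOn_rpow_mul_sub_rpow_mul_rpow (hα : α ∈ Ioo 0 1) :
    IntegrableOn (fun z : ℝ × ℝ => z.1 ^ (α - 1) * (z.2 - z.1) ^ (-α) * z.2 ^ (α - 1))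
      (openTriangle T) := by
  obtain ⟨h0, h1⟩ := hα
  have hmeas : Measurable fun z : ℝ × ℝ => z.1 ^ (α - 1) * (z.2 - z.1) ^ (-α) * z.2 ^ (α - 1) := by
    fun_prop
  refine (integrableOn_rpow_mul_sub_rpow (a := α ^ 2 - 1) (b := α * (1 - α) - 1) (by nlinarith)
    (by nlinarith)).mono' hmeas.aestronglyMeasurable ?_
  refine (ae_restrict_mem (measurableSet T)).mono fun ⟨p, r⟩ ⟨hp, hpr, _⟩ => ?_
  have hrp : 0 < r - p := sub_pos.2 hpr
  have hr : 0 < r := hp.trans hpr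
  have hsplit : r ^ (α - 1) ≤ p ^ (-(α * (1 - α))) * (r - p) ^ (-(1 - α) ^ 2) := by
    convert rpow_neg_add_le_mul_rpow_neg hp hrp (a := α * (1 - α)) (b := (1 - α) ^ 2)
      (by nlinarith) (by positivity) using 2 <;> ring
  rw [Real.norm_of_nonneg (by positivity)]
  calc p ^ (α - 1) * (r - p) ^ (-α) * r ^ (α - 1)
      ≤ p ^ (α - 1) * (r - p) ^ (-α) *
          (p ^ (-(α * (1 - α))) * (r - p) ^ (-(1 - α) ^ 2)) := by gcongr
    _ = p ^ (α - 1 + -(α * (1 - α))) * (r - p) ^ (-α + -(1 - α) ^ 2) := by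
        rw [Real.rpow_add hp, Real.rpow_add hrp]; ring
    _ = p ^ (α ^ 2 - 1) * (r - p) ^ (α * (1 - α) - 1) := by congr 2 <;> ring

end openTriangle

section Abel

variable {E : Type*} [NormedAddCommGroup E] [NormedSpace ℝ E] {α p τ T C : ℝ}

/-- The derivative of `r ↦ (r - p) ^ (-α) • f r` on `(p, ∞)`, where `f'` is the derivative of `f`:
the inner integrand when an Abel-type integral is differentiated in its upper limit. -/
noncomputable def abelDeriv (α p : ℝ) (f f' : ℝ → E) (r : ℝ) : E :=
  (r - p) ^ (-α) • f' r - (α * (r - p) ^ (-α - 1)) • f r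

lemma hasDerivAt_rpow_neg_smul {f f' : ℝ → E} {r : ℝ} (hpr : p < r)
    (hf : HasDerivAt f (f' r) r) :
    HasDerivAt (fun r => (r - p) ^ (-α) • f r) (abelDeriv α p f f' r) r := by
  refine ((((hasDerivAt_id' r).sub_const p).rpow_const (p := -α)
    (Or.inl (sub_pos.2 hpr).ne')).smul hf).congr_deriv ?_
  rw [abelDeriv]
  module

lemma tendsto_rpow_neg_smul_nhdsGT {f : ℝ → E} {f' : E} (hα : α < 1) (hfp : f p = 0)
    (hf : HasDerivAt f f' p) :
    Tendsto (fun r => (r - p) ^ (-α) • f r) (𝓝[>] p) (𝓝 0) := by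
  have hslope : Tendsto (slope f p) (𝓝[>] p) (𝓝 f') :=
    hf.tendsto_slope.mono_left (nhdsWithin_mono _ fun _ hr => ne_of_gt hr)
  have hpow : Tendsto (fun r => (r - p) ^ (1 - α)) (𝓝[>] p) (𝓝 0) := by
    have hcont : ContinuousAt (fun r => (r - p) ^ (1 - α)) p :=
      (continuousAt_id.sub continuousAt_const).rpow_const (Or.inr (sub_nonneg.2 hα.le))
    simpa [ContinuousAt, Real.zero_rpow (sub_pos.2 hα).ne'] using
      hcont.tendsto.mono_left nhdsWithin_le_nhds
  rw [← zero_smul ℝ f']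
  refine (hpow.smul hslope).congr' ?_
  filter_upwards [self_mem_nhdsWithin] with r hr
  have hrp : 0 < r - p := sub_pos.2 hr
  rw [slope_def_module, hfp, sub_zero, smul_smul, ← Real.rpow_neg_one, ← Real.rpow_add hrp]
  congr 2
  ring

lemma integral_abelDeriv [CompleteSpace E] {f f' : ℝ → E} (hα : α < 1) (hpτ : p < τ)
    (hfp : f p = 0) (hf : ContinuousOn f (Icc p τ)) (hf' : ∀ r ∈ Ico p τ, HasDerivAt f (f' r) r)
    (hint : IntervalIntegrable (abelDeriv α p f f') volume p τ) :
    ∫ r in p..τ, abelDeriv α p f f' r = (τ - p) ^ (-α) • f τ := by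
  rw [intervalIntegral.integral_eq_sub_of_hasDerivAt_of_tendsto hpτ
    (fun r hr => hasDerivAt_rpow_neg_smul hr.1 (hf' r ⟨hr.1.le, hr.2⟩)) hint
    (tendsto_rpow_neg_smul_nhdsGT hα hfp (hf' p ⟨le_rfl, hpτ⟩)) (fb := (τ - p) ^ (-α) • f τ),
    sub_zero]
  have hf_left : Tendsto f (𝓝[<] τ) (𝓝 (f τ)) :=
    (hf τ ⟨hpτ.le, le_rfl⟩).mono_left (nhdsWithin_le_of_mem (Icc_mem_nhdsLT hpτ))
  have hpow : ContinuousAt (fun r => (r - p) ^ (-α)) τ :=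
    (continuousAt_id.sub continuousAt_const).rpow_const (Or.inl (sub_pos.2 hpτ).ne')
  exact (hpow.tendsto.mono_left nhdsWithin_le_nhds).smul hf_left

lemma norm_abelDeriv_le {f f' : ℝ → E} {r : ℝ} (hα : 0 < α) (hpr : p < r)
    (hf : ‖f r‖ ≤ C / α * (r - p)) (hf' : ‖f' r‖ ≤ C) :
    ‖abelDeriv α p f f' r‖ ≤ 2 * C * (r - p) ^ (-α) := by
  have hrp : 0 < r - p := sub_pos.2 hpr
  calc ‖abelDeriv α p f f' r‖
      ≤ (r - p) ^ (-α) * ‖f' r‖ + α * (r - p) ^ (-α - 1) * ‖f r‖ := by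
        refine (norm_sub_le _ _).trans_eq ?_
        rw [norm_smul, norm_smul, Real.norm_of_nonneg (by positivity),
          Real.norm_of_nonneg (by positivity)]
    _ ≤ (r - p) ^ (-α) * C + α * (r - p) ^ (-α - 1) * (C / α * (r - p)) := by gcongr
    _ = 2 * C * (r - p) ^ (-α) := by
        rw [Real.rpow_sub_one hrp.ne']
        field_simp
        ring

lemma integrableOn_openTriangle_abelDeriv {f f' : ℝ → ℝ → E} (hα : α ∈ Ioo 0 1)
    (hf : ContinuousOn (Function.uncurry f) (openTriangle T))
    (hf' : ContinuousOn (Function.uncurry f') (openTriangle T))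
    (hf_bound : ∀ p ∈ Ioo 0 T, ∀ r ∈ Ioo p T,
      ‖f p r‖ ≤ C * (p ^ (α - 1) * r ^ (α - 1)) / α * (r - p))
    (hf'_bound : ∀ p ∈ Ioo 0 T, ∀ r ∈ Ioo p T, ‖f' p r‖ ≤ C * (p ^ (α - 1) * r ^ (α - 1))) :
    IntegrableOn (Function.uncurry fun p => abelDeriv α p (f p) (f' p)) (openTriangle T) := by
  have measurable_pow (c : ℝ) : Measurable fun z : ℝ × ℝ => (z.2 - z.1) ^ c := by fun_prop
  refine ((openTriangle.integrableOn_rpow_mul_sub_rpow_mul_rpow hα).const_mul (2 * C)).mono' ?_ ?_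
  · have hT := openTriangle.measurableSet T
    exact ((measurable_pow (-α)).aestronglyMeasurable.smul (hf'.aestronglyMeasurable hT)).sub
      (((measurable_pow (-α - 1)).const_mul α).aestronglyMeasurable.smul
        (hf.aestronglyMeasurable hT))
  · refine (ae_restrict_mem (openTriangle.measurableSet T)).mono fun ⟨p, r⟩ ⟨hp, hpr, hr⟩ => ?_
    have hpT : p ∈ Ioo 0 T := ⟨hp, hpr.trans hr⟩
    refine (norm_abelDeriv_le hα.1 hpr (hf_bound p hpT r ⟨hpr, hr⟩)
      (hf'_bound p hpT r ⟨hpr, hr⟩)).trans_eq ?_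
    ring

theorem exists_integrableOn_integral_rpow_neg_smul_eq [CompleteSpace E] {f f' : ℝ → ℝ → E}
    (hα : α ∈ Ioo 0 1) (hC : 0 ≤ C)
    (hf_diag : ∀ p ∈ Ioo 0 T, f p p = 0)
    (hf_cont : ∀ p ∈ Ioo 0 T, ContinuousOn (f p) (Icc p T))
    (hf_deriv : ∀ p ∈ Ioo 0 T, ∀ r ∈ Ico p T, HasDerivAt (f p) (f' p r) r)
    (hf : ContinuousOn (Function.uncurry f) (openTriangle T))
    (hf' : ContinuousOn (Function.uncurry f') (openTriangle T))
    (hf'_bound : ∀ p ∈ Ioo 0 T, ∀ r ∈ Ico p T, ‖f' p r‖ ≤ C * (p ^ (α - 1) * r ^ (α - 1))) :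
    ∃ d : ℝ → E, IntegrableOn d (Icc 0 T) ∧ ∀ τ ∈ Icc 0 T,
      ∫ p in (0 : ℝ)..τ, (τ - p) ^ (-α) • f p τ = ∫ r in (0 : ℝ)..τ, d r := by
  have hf_bound : ∀ p ∈ Ioo 0 T, ∀ r ∈ Ioo p T,
      ‖f p r‖ ≤ C * (p ^ (α - 1) * r ^ (α - 1)) / α * (r - p) := by
    intro p hp r hr
    have hp0 := hp.1
    refine (norm_le_of_norm_deriv_le_rpow (C := C * p ^ (α - 1)) ⟨hα.1, hα.2.le⟩ hp.1
      (by positivity) (hf_diag p hp) (hf_cont p hp) (hf_deriv p hp)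
      (fun r hr => (hf'_bound p hp r hr).trans_eq (by ring)) ⟨hr.1.le, hr.2.le⟩).trans_eq (by ring)
  have hint := integrableOn_openTriangle_abelDeriv hα hf hf' hf_bound
    fun p hp r hr => hf'_bound p hp r ⟨hr.1.le, hr.2⟩
  refine ⟨_, openTriangle.integrableOn_integral hint, fun τ hτ => ?_⟩
  have hintτ := hint.mono_set (openTriangle.mono hτ.2)
  rw [← openTriangle.integral_integral_swap hτ.1 hintτ, intervalIntegral.integral_of_le hτ.1,
    intervalIntegral.integral_of_le hτ.1, integral_Ioc_eq_integral_Ioo,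
    integral_Ioc_eq_integral_Ioo]
  refine setIntegral_congr_ae measurableSet_Ioo ?_
  filter_upwards [openTriangle.ae_intervalIntegrable hintτ] with p hp_int hp
  have hpT : p ∈ Ioo 0 T := ⟨hp.1, hp.2.trans_le hτ.2⟩
  exact (integral_abelDeriv hα.2 hp.2 (hf_diag p hpT)
    ((hf_cont p hpT).mono (Icc_subset_Icc_right hτ.2))
    (fun r hr => hf_deriv p hpT r ⟨hr.1, hr.2.trans_le hτ.2⟩) (hp_int hp)).symm

end Abel

section CosineTransform

lemma contDiff_one_integral_mul_cos {a : ℝ → ℝ} (ha : Continuous a) (c d : ℝ) :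
    ContDiff ℝ 1 fun ω => ∫ x in c..d, a x * Real.cos (ω * x) := by
  have hderiv (ω : ℝ) : HasDerivAt (fun ω => ∫ x in c..d, a x * Real.cos (ω * x))
      (∫ x in c..d, a x * (-Real.sin (ω * x) * x)) ω := by
    refine (intervalIntegral.hasDerivAt_integral_of_dominated_loc_of_deriv_le
      (F' := fun ω x => a x * (-Real.sin (ω * x) * x)) (bound := fun x => |a x * x|)
      univ_mem (.of_forall fun ω => ?_) ?_ ?_ ?_ ?_ ?_).2
    · exact (by fun_prop : Continuous _).aestronglyMeasurable
    · exact (by fun_prop : Continuous _).intervalIntegrable _ _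
    · exact (by fun_prop : Continuous _).aestronglyMeasurable
    · refine .of_forall fun x _ ω _ => ?_
      calc ‖a x * (-Real.sin (ω * x) * x)‖ = |a x * x| * |Real.sin (ω * x)| := by
            rw [Real.norm_eq_abs, ← abs_mul, ← abs_neg]
            ring_nf
        _ ≤ |a x * x| := mul_le_of_le_one_right (abs_nonneg _) (Real.abs_sin_le_one _)
    · exact (by fun_prop : Continuous _).intervalIntegrable _ _
    · exact .of_forall fun x _ ω _ => ((hasDerivAt_mul_const x).cos).const_mul (a x)
  rw [contDiff_one_iff_deriv]
  refine ⟨fun ω => (hderiv ω).differentiableAt, ?_⟩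
  rw [funext fun ω => (hderiv ω).deriv]
  exact intervalIntegral.continuous_parametric_intervalIntegral_of_continuous'
    (by fun_prop) c d

end CosineTransform

section Similarity

variable {s : ℝ → ℝ} {p σ : ℝ}

lemma phi_eq_phi_id_div (s : ℝ → ℝ) (n : ℕ) (x t : ℝ) (hσ : 0 < σ) :
    phi s n x t = (√σ)⁻¹ * phi id n (x / σ) (s t / σ) := by
  have hsqrt : √(2 / (s t / σ)) = √σ * √(2 / s t) := by
    rw [← Real.sqrt_mul hσ.le, div_div_eq_mul_div, mul_div_right_comm, mul_comm]
  have hfreq : lam id n (s t / σ) * (x / σ) = lam s n t * x := by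
    simp only [lam, id_eq]
    field_simp
  rw [phi, phi, hfreq, id_eq, hsqrt]
  field [(Real.sqrt_pos.2 hσ).ne']

lemma hasDerivAt_phi_id_one (n : ℕ) (x : ℝ) :
    HasDerivAt (phi id n x)
      (√2 * (lam id n 1 * x * Real.sin (lam id n 1 * x) - Real.cos (lam id n 1 * x) / 2)) 1 := by
  have hdiv (c : ℝ) : HasDerivAt (fun r : ℝ => c / r) (-c) 1 :=
    ((hasDerivAt_inv one_ne_zero).const_mul c).congr_deriv (by simp)
  have hamp := (hdiv 2).sqrt (by norm_num)
  have hcos := (((hdiv Real.pi).mul_const ((n : ℝ) + 1 / 2)).mul_const x).cos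
  refine (hamp.mul hcos).congr_deriv ?_
  have h2 : √2 * √2 = 2 := Real.mul_self_sqrt zero_le_two
  simp only [lam, id_eq, div_one]
  field_simp
  linear_combination Real.cos (Real.pi * (2 * n + 1) * x / 2) * h2

lemma continuous_deriv_phi_id_one (n : ℕ) : Continuous fun x => deriv (phi id n x) 1 := by
  simp only [fun x => (hasDerivAt_phi_id_one n x).deriv]
  fun_prop

lemma deriv_phi_eq {s' : ℝ} (n : ℕ) (x : ℝ) (hp : 0 < s p) (hs : HasDerivAt s s' p) :
    deriv (fun r => phi s n x r) p =
      (√(s p))⁻¹ * (deriv (phi id n (x / s p)) 1 * (s' / s p)) := by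
  have hratio : HasDerivAt (fun r => s r / s p) (s' / s p) p := hs.div_const _
  have hphi := (hasDerivAt_phi_id_one n (x / s p)).differentiableAt.hasDerivAt
  rw [← div_self hp.ne'] at hphi
  simp only [fun r => phi_eq_phi_id_div s n x r hp]
  have hchain : HasDerivAt (fun r => (√(s p))⁻¹ * phi id n (x / s p) (s r / s p))
      ((√(s p))⁻¹ * (deriv (phi id n (x / s p)) (s p / s p) * (s' / s p))) p :=
    (hphi.comp p hratio).const_mul _
  rw [hchain.deriv, div_self hp.ne']

lemma Dtil_eq_smul_Dtil_id {s' : ℝ} (m : ℕ) (τ : ℝ) (hp : 0 < s p) (hs : HasDerivAt s s' p) :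
    Dtil s m p τ = (s' / s p) • Dtil id m 1 (s τ / s p) := by
  ext n k
  have hintegrand (x : ℝ) :
      deriv (fun r => phi s n x r) p * (phi s k x τ - phi s k x p) =
        (s' / s p) * (s p)⁻¹ * (deriv (phi id n (x / s p)) 1 *
          (phi id k (x / s p) (s τ / s p) - phi id k (x / s p) 1)) := by
    rw [deriv_phi_eq n x hp hs, phi_eq_phi_id_div s k x τ hp, phi_eq_phi_id_div s k x p hp,
      div_self hp.ne', ← mul_sub]
    have hsqrt : (√(s p))⁻¹ * (√(s p))⁻¹ = (s p)⁻¹ := by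
      rw [← mul_inv, Real.mul_self_sqrt hp.le]
    rw [← hsqrt]
    ring
  simp only [Dtil, Matrix.of_apply, Matrix.smul_apply, hintegrand, id_eq, smul_eq_mul]
  rw [intervalIntegral.integral_const_mul, intervalIntegral.integral_comp_div
    (fun y => deriv (phi id n y) 1 * (phi id k y (s τ / s p) - phi id k y 1)) hp.ne',
    zero_div, div_self hp.ne', smul_eq_mul, mul_assoc, inv_mul_cancel_left₀ hp.ne']

lemma Dtil_self (s : ℝ → ℝ) (m : ℕ) (τ : ℝ) : Dtil s m τ τ = 0 := by
  ext
  simp [Dtil]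

lemma contDiffOn_Dtil_id_one (m : ℕ) (n k : Fin (m + 1)) :
    ContDiffOn ℝ 1 (fun w => Dtil id m 1 w n k) (Ioi 0) := by
  set a := fun x => deriv (phi id n x) 1 with a_def
  have ha : Continuous a := continuous_deriv_phi_id_one n
  have hint (w : ℝ) : IntervalIntegrable (fun x => a x * phi id k x w) volume 0 1 :=
    (by unfold phi; fun_prop : Continuous _).intervalIntegrable _ _
  have hDtil (w : ℝ) : Dtil id m 1 w n k =
      √(2 / w) * (∫ x in (0 : ℝ)..1, a x * Real.cos (lam id k w * x)) -
        ∫ x in (0 : ℝ)..1, a x * phi id k x 1 := by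
    calc Dtil id m 1 w n k = ∫ x in (0 : ℝ)..1, (a x * phi id k x w - a x * phi id k x 1) := by
          simp only [Dtil, Matrix.of_apply, id_eq, mul_sub, a_def]
      _ = _ := by
          rw [intervalIntegral.integral_sub (hint w) (hint 1),
            ← intervalIntegral.integral_const_mul]
          simp only [phi, id_eq, mul_left_comm]
  have hfreq : ContDiffOn ℝ 1 (lam id k) (Ioi 0) :=
    (contDiffOn_const.div contDiffOn_id fun w hw => (mem_Ioi.1 hw).ne').mul contDiffOn_const
  have hamp : ContDiffOn ℝ 1 (fun w : ℝ => √(2 / w)) (Ioi 0) :=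
    (contDiffOn_const.div contDiffOn_id fun w hw => (mem_Ioi.1 hw).ne').sqrt
      fun w hw => (div_pos two_pos hw).ne'
  simp only [hDtil]
  exact (hamp.mul ((contDiff_one_integral_mul_cos ha 0 1).comp_contDiffOn hfreq)).sub
    contDiffOn_const

lemma contDiffOn_Dtil_id_one_mulVec (m : ℕ) :
    ContDiffOn ℝ 1 (fun z : ℝ × (Fin (m + 1) → ℝ) => (Dtil id m 1 z.1).mulVec z.2)
      (Ioi 0 ×ˢ univ) := by
  refine contDiffOn_pi.2 fun n => ?_
  simp only [Matrix.mulVec, dotProduct]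
  exact ContDiffOn.sum fun k _ =>
    ((contDiffOn_Dtil_id_one m n k).comp contDiffOn_fst fun z hz => hz.1).mul
      ((contDiff_apply ℝ ℝ k).comp contDiff_snd).contDiffOn

end Similarity

section WeightedContinuity

variable {g : ℝ → ℝ} {a T t : ℝ}

lemma eq_rpow_neg_mul (g : ℝ → ℝ) (a : ℝ) (ht : 0 < t) : g t = t ^ (-a) * (t ^ a * g t) := by
  rw [← mul_assoc, ← Real.rpow_add ht, neg_add_cancel, Real.rpow_zero, one_mul]

lemma continuousOn_of_continuousOn_rpow_mul (hg : ContinuousOn (fun t => t ^ a * g t) (Icc 0 T)) :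
    ContinuousOn g (Ioc 0 T) :=
  ((continuousOn_id.rpow_const fun _ ht => Or.inl ht.1.ne').mul
    (hg.mono Ioc_subset_Icc_self)).congr fun _ ht => eq_rpow_neg_mul g a ht.1

lemma exists_norm_le_mul_rpow_neg (hg : ContinuousOn (fun t => t ^ a * g t) (Icc 0 T)) :
    ∃ C, 0 ≤ C ∧ ∀ t ∈ Ioc 0 T, ‖g t‖ ≤ C * t ^ (-a) := by
  obtain ⟨C, hC⟩ := isCompact_Icc.exists_bound_of_continuousOn hg
  refine ⟨max C 0, le_max_right _ _, fun t ht => ?_⟩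
  have ht0 := ht.1
  rw [eq_rpow_neg_mul g a ht.1, norm_mul, Real.norm_of_nonneg (by positivity), mul_comm]
  gcongr
  exact (hC t (Ioc_subset_Icc_self ht)).trans (le_max_left _ _)

lemma integrableOn_of_continuousOn_rpow_mul (ha : a < 1)
    (hg : ContinuousOn (fun t => t ^ a * g t) (Icc 0 T)) : IntegrableOn g (Icc 0 T) := by
  have hpow : IntegrableOn (fun t : ℝ => t ^ (-a)) (Icc 0 T) := by
    rw [integrableOn_Icc_iff_integrableOn_Ioc]
    exact (intervalIntegral.intervalIntegrable_rpow' (neg_lt_neg ha)).1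
  have hmul := hpow.mul_continuousOn hg isCompact_Icc
  rw [integrableOn_Icc_iff_integrableOn_Ioc] at hmul ⊢
  exact hmul.congr_fun (fun t ht => (eq_rpow_neg_mul g a ht.1).symm) measurableSet_Ioc

end WeightedContinuity

section Primitive

variable {s s' : ℝ → ℝ} {b T : ℝ}

lemma continuousOn_of_eq_add_integral (hs' : IntegrableOn s' (Icc 0 T))
    (hs : ∀ t ∈ Icc 0 T, s t = b + ∫ τ in (0 : ℝ)..t, s' τ) : ContinuousOn s (Icc 0 T) := by
  refine ((intervalIntegral.continuousOn_primitive hs').const_add b).congr fun t ht => ?_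
  rw [hs t ht, intervalIntegral.integral_of_le ht.1]

lemma hasDerivAt_of_eq_add_integral (hs' : IntegrableOn s' (Icc 0 T))
    (hs : ∀ t ∈ Icc 0 T, s t = b + ∫ τ in (0 : ℝ)..t, s' τ) {t : ℝ} (ht : t ∈ Ioo 0 T)
    (hs'_cont : ContinuousOn s' (Ioo 0 T)) : HasDerivAt s (s' t) t := by
  have hint : IntervalIntegrable s' volume 0 t :=
    (intervalIntegrable_iff_integrableOn_Icc_of_le ht.1.le).2
      (hs'.mono_set (Icc_subset_Icc_right ht.2.le))
  have hprimitive : HasDerivAt (fun u => ∫ x in (0 : ℝ)..u, s' x) (s' t) t :=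
    intervalIntegral.integral_hasDerivAt_right hint
      (hs'_cont.stronglyMeasurableAtFilter isOpen_Ioo t ht)
      (hs'_cont.continuousAt (isOpen_Ioo.mem_nhds ht))
  refine (hprimitive.const_add b).congr_of_eventuallyEq ?_
  filter_upwards [isOpen_Ioo.mem_nhds ht] with u hu using hs u (Ioo_subset_Icc_self hu)

end Primitive

section SimilarityKernel

lemma continuousOn_ratio_prodMk {V : Type*} [TopologicalSpace V] {s : ℝ → ℝ} {v : ℝ → V} {T : ℝ}
    (hs : ContinuousOn s (Icc 0 T)) (hs_pos : ∀ t ∈ Icc 0 T, 0 < s t)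
    (hv : ContinuousOn v (Icc 0 T)) :
    ContinuousOn (fun z : ℝ × ℝ => (s z.2 / s z.1, v z.1)) (Icc 0 T ×ˢ Icc 0 T) := by
  have hfst : MapsTo Prod.fst (Icc 0 T ×ˢ Icc 0 T) (Icc 0 T) := fun _ hz => hz.1
  have hsnd : MapsTo Prod.snd (Icc 0 T ×ˢ Icc 0 T) (Icc 0 T) := fun _ hz => hz.2
  exact ((hs.comp continuousOn_snd hsnd).div (hs.comp continuousOn_fst hfst)
    fun z hz => (hs_pos _ hz.1).ne').prodMk (hv.comp continuousOn_fst hfst)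

variable {V E : Type*} [NormedAddCommGroup V] [NormedSpace ℝ V] [NormedAddCommGroup E]
  [NormedSpace ℝ E] {F : ℝ × V → E} {s s' : ℝ → ℝ} {v : ℝ → V} {α T : ℝ}

/-- The Volterra kernel `(s'(p) / s(p)) F(s(r) / s(p), v(p))` of a profile `F`: for `s'` the
derivative of `s` and `F (w, u) = Dtil id m 1 w *ᵥ u` it is `Dtil s m p r *ᵥ v p`. -/
noncomputable def similarityKernel (F : ℝ × V → E) (s s' : ℝ → ℝ) (v : ℝ → V) (p r : ℝ) : E :=
  (s' p / s p) • F (s r / s p, v p)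

/-- The derivative of `similarityKernel F s s' v p r` in `r`, divided by `s'(p) s'(r)`. -/
noncomputable def similarityKernelSlope (F : ℝ × V → E) (s : ℝ → ℝ) (v : ℝ → V) (p r : ℝ) : E :=
  (s p ^ 2)⁻¹ • fderiv ℝ F (s r / s p, v p) (1, 0)

lemma hasDerivAt_similarityKernel (hF : ContDiffOn ℝ 1 F (Ioi 0 ×ˢ univ)) {p r : ℝ}
    (hp : 0 < s p) (hr : 0 < s r) (hs : HasDerivAt s (s' r) r) :
    HasDerivAt (similarityKernel F s s' v p)
      ((s' p * s' r) • similarityKernelSlope F s v p r) r := by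
  have hopen : IsOpen (Ioi (0 : ℝ) ×ˢ (univ : Set V)) := isOpen_Ioi.prod isOpen_univ
  have hFd := ((hF.differentiableOn one_ne_zero).differentiableAt
    (hopen.mem_nhds (x := (s r / s p, v p)) ⟨div_pos hr hp, mem_univ _⟩)).hasFDerivAt
  have harg : HasDerivAt (fun r => (s r / s p, v p)) (s' r / s p, 0) r :=
    (hs.div_const _).prodMk (hasDerivAt_const _ _)
  refine ((hFd.comp_hasDerivAt r harg).const_smul (s' p / s p)).congr_deriv ?_
  have hsmul : (s' r / s p, (0 : V)) = (s' r / s p) • ((1 : ℝ), (0 : V)) := by simp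
  rw [hsmul, map_smul, similarityKernelSlope, smul_smul, smul_smul]
  congr 1
  field

lemma continuousOn_similarityKernelSlope (hF : ContDiffOn ℝ 1 F (Ioi 0 ×ˢ univ))
    (hs : ContinuousOn s (Icc 0 T)) (hs_pos : ∀ t ∈ Icc 0 T, 0 < s t)
    (hv : ContinuousOn v (Icc 0 T)) :
    ContinuousOn (Function.uncurry (similarityKernelSlope F s v)) (Icc 0 T ×ˢ Icc 0 T) := by
  have hfderiv := (hF.continuousOn_fderiv_of_isOpen (isOpen_Ioi.prod isOpen_univ) le_rfl).comp
    (continuousOn_ratio_prodMk hs hs_pos hv)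
    fun z hz => ⟨div_pos (hs_pos _ hz.2) (hs_pos _ hz.1), mem_univ _⟩
  exact (((hs.comp continuousOn_fst fun _ hz => hz.1).pow 2).inv₀
    fun z hz => (pow_pos (hs_pos _ hz.1) 2).ne').smul (hfderiv.clm_apply continuousOn_const)

lemma continuousOn_similarityKernel (hF : ContDiffOn ℝ 1 F (Ioi 0 ×ˢ univ))
    (hs : ContinuousOn s (Icc 0 T)) (hs_pos : ∀ t ∈ Icc 0 T, 0 < s t)
    (hs' : ContinuousOn s' (Ioc 0 T)) (hv : ContinuousOn v (Icc 0 T)) :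
    ContinuousOn (Function.uncurry (similarityKernel F s s' v)) (Ioc 0 T ×ˢ Icc 0 T) := by
  have hfst : MapsTo Prod.fst (Ioc 0 T ×ˢ Icc 0 T) (Ioc 0 T) := fun _ hz => hz.1
  have hspeed := (hs'.div (hs.mono Ioc_subset_Icc_self)
    fun t ht => (hs_pos t (Ioc_subset_Icc_self ht)).ne').comp continuousOn_fst hfst
  have hprofile := (hF.continuousOn.comp (continuousOn_ratio_prodMk hs hs_pos hv)
    fun z hz => ⟨div_pos (hs_pos _ hz.2) (hs_pos _ hz.1), mem_univ _⟩).mono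
    (prod_mono_left Ioc_subset_Icc_self)
  exact hspeed.smul hprofile

lemma exists_norm_smul_similarityKernelSlope_le (hF : ContDiffOn ℝ 1 F (Ioi 0 ×ˢ univ))
    (hs : ContinuousOn s (Icc 0 T)) (hs_pos : ∀ t ∈ Icc 0 T, 0 < s t)
    (hs' : ContinuousOn (fun t => t ^ (1 - α) * s' t) (Icc 0 T))
    (hv : ContinuousOn v (Icc 0 T)) :
    ∃ C, 0 ≤ C ∧ ∀ p ∈ Ioc 0 T, ∀ r ∈ Ioc 0 T,
      ‖(s' p * s' r) • similarityKernelSlope F s v p r‖ ≤ C * (p ^ (α - 1) * r ^ (α - 1)) := by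
  obtain ⟨C, hC, hs'_le⟩ := exists_norm_le_mul_rpow_neg hs'
  obtain ⟨M, hM⟩ := (isCompact_Icc.prod isCompact_Icc).exists_bound_of_continuousOn
    (continuousOn_similarityKernelSlope hF hs hs_pos hv)
  simp only [neg_sub] at hs'_le
  refine ⟨C * C * max M 0, by positivity, fun p hp r hr => ?_⟩
  have hp0 := hp.1
  have hr0 := hr.1
  calc ‖(s' p * s' r) • similarityKernelSlope F s v p r‖
      = ‖s' p‖ * ‖s' r‖ * ‖similarityKernelSlope F s v p r‖ := by rw [norm_smul, norm_mul]
    _ ≤ C * p ^ (α - 1) * (C * r ^ (α - 1)) * max M 0 := by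
        gcongr
        · exact hs'_le p hp
        · exact hs'_le r hr
        · exact (hM (p, r) ⟨Ioc_subset_Icc_self hp, Ioc_subset_Icc_self hr⟩).trans
            (le_max_left _ _)
    _ = C * C * max M 0 * (p ^ (α - 1) * r ^ (α - 1)) := by ring

theorem exists_integrableOn_integral_rpow_neg_smul_similarityKernel_eq [CompleteSpace E]
    (hα : α ∈ Ioo 0 1) (hF : ContDiffOn ℝ 1 F (Ioi 0 ×ˢ univ)) (hF_one : ∀ u, F (1, u) = 0)
    (hs : ContinuousOn s (Icc 0 T)) (hs_pos : ∀ t ∈ Icc 0 T, 0 < s t)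
    (hs_deriv : ∀ t ∈ Ioo 0 T, HasDerivAt s (s' t) t)
    (hs' : ContinuousOn (fun t => t ^ (1 - α) * s' t) (Icc 0 T))
    (hv : ContinuousOn v (Icc 0 T)) :
    ∃ d : ℝ → E, IntegrableOn d (Icc 0 T) ∧ ∀ τ ∈ Icc 0 T,
      ∫ p in (0 : ℝ)..τ, (τ - p) ^ (-α) • similarityKernel F s s' v p τ =
        ∫ r in (0 : ℝ)..τ, d r := by
  obtain ⟨C, hC, hbound⟩ := exists_norm_smul_similarityKernelSlope_le hF hs hs_pos hs' hv
  have hs'_cont := continuousOn_of_continuousOn_rpow_mul hs'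
  have hkernel := continuousOn_similarityKernel hF hs hs_pos hs'_cont hv
  have hslope := continuousOn_similarityKernelSlope hF hs hs_pos hv
  have hsubset : openTriangle T ⊆ Ioc 0 T ×ˢ Ioc 0 T := fun z hz =>
    ⟨⟨hz.1, (hz.2.1.trans hz.2.2).le⟩, ⟨hz.1.trans hz.2.1, hz.2.2.le⟩⟩
  have hspeeds : ContinuousOn (fun z : ℝ × ℝ => s' z.1 * s' z.2) (Ioc 0 T ×ˢ Ioc 0 T) :=
    (hs'_cont.comp continuousOn_fst fun _ hz => hz.1).mul
      (hs'_cont.comp continuousOn_snd fun _ hz => hz.2)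
  refine exists_integrableOn_integral_rpow_neg_smul_eq hα hC
    (f' := fun p r => (s' p * s' r) • similarityKernelSlope F s v p r) (fun p hp => ?_)
    (fun p hp => ?_) (fun p hp r hr => ?_)
    (hkernel.mono (hsubset.trans (prod_mono_right Ioc_subset_Icc_self)))
    ((hspeeds.mono hsubset).smul
      (hslope.mono (hsubset.trans (prod_mono Ioc_subset_Icc_self Ioc_subset_Icc_self))))
    (fun p hp r hr => hbound p (Ioo_subset_Ioc_self hp) r ⟨hp.1.trans_le hr.1, hr.2.le⟩)
  · rw [similarityKernel, div_self (hs_pos p (Ioo_subset_Icc_self hp)).ne', hF_one, smul_zero]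
  · exact hkernel.uncurry_left p (Ioo_subset_Ioc_self hp) |>.mono (Icc_subset_Icc_left hp.1.le)
  · have hr0 : 0 < r := hp.1.trans_le hr.1
    exact hasDerivAt_similarityKernel hF (hs_pos p (Ioo_subset_Icc_self hp))
      (hs_pos r ⟨hr0.le, hr.2.le⟩) (hs_deriv r ⟨hr0, hr.2⟩)

end SimilarityKernel

lemma pos_of_eq_add_integral_nonneg {s s' : ℝ → ℝ} {b T : ℝ} (hb : 0 < b)
    (hs : ∀ t ∈ Icc 0 T, s t = b + ∫ τ in (0 : ℝ)..t, s' τ) (hs' : ∀ t ∈ Icc 0 T, 0 ≤ s' t) :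
    ∀ t ∈ Icc 0 T, 0 < s t := fun t ht => by
  rw [hs t ht]
  exact add_pos_of_pos_of_nonneg hb
    (intervalIntegral.integral_nonneg ht.1 fun u hu => hs' u ⟨hu.1, hu.2.trans ht.2⟩)

theorem stmt_8_general {α T b : ℝ} {m : ℕ} (hα : α ∈ Ioo 0 1) {s s' : ℝ → ℝ}
    (hs_eq : ∀ t ∈ Icc 0 T, s t = b + ∫ τ in (0 : ℝ)..t, s' τ)
    (hs_pos : ∀ t ∈ Icc 0 T, 0 < s t)
    (hs' : ContinuousOn (fun t => t ^ (1 - α) * s' t) (Icc 0 T))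
    {v : ℝ → Fin (m + 1) → ℝ} (hv : ContinuousOn v (Icc 0 T)) :
    ∃ d : ℝ → Fin (m + 1) → ℝ, IntegrableOn d (Icc 0 T) ∧ ∀ τ ∈ Icc 0 T,
      ∫ p in (0 : ℝ)..τ, (τ - p) ^ (-α) • (Dtil s m p τ).mulVec (v p) =
        ∫ r in (0 : ℝ)..τ, d r := by
  have hs'_int := integrableOn_of_continuousOn_rpow_mul (sub_lt_self 1 hα.1) hs'
  have hs'_cont := (continuousOn_of_continuousOn_rpow_mul hs').mono Ioo_subset_Ioc_self
  have hs_deriv : ∀ t ∈ Ioo 0 T, HasDerivAt s (s' t) t :=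
    fun t ht => hasDerivAt_of_eq_add_integral hs'_int hs_eq ht hs'_cont
  obtain ⟨d, hd, hd_eq⟩ := exists_integrableOn_integral_rpow_neg_smul_similarityKernel_eq hα
    (contDiffOn_Dtil_id_one_mulVec m) (fun u => by rw [Dtil_self, Matrix.zero_mulVec])
    (continuousOn_of_eq_add_integral hs'_int hs_eq) hs_pos hs_deriv hs' hv
  refine ⟨d, hd, fun τ hτ => ?_⟩
  rw [← hd_eq τ hτ]
  refine intervalIntegral.integral_congr_Ioo_of_le hτ.1 fun p hp => ?_
  have hpT : p ∈ Ioo 0 T := ⟨hp.1, hp.2.trans_le hτ.2⟩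
  rw [similarityKernel, Dtil_eq_smul_Dtil_id m τ (hs_pos p (Ioo_subset_Icc_self hpT))
    (hs_deriv p hpT), Matrix.smul_mulVec]

/-- If `v ∈ C([0,T];ℝ^{m+1})`, then
`g₁(τ) = ∫₀^τ (τ−p)^{−α} D̃(p,τ) v(p) dp` has an absolutely continuous representative
`g̃₁` with `g̃₁(0) = 0`. -/
theorem stmt_8 (α T b : ℝ) (m : ℕ) (hα : α ∈ Set.Ioo (0:ℝ) 1) (hT : 0 < T) (hb : 0 < b)
    (s s' : ℝ → ℝ)
    (hs'int : IntegrableOn s' (Set.Icc 0 T))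
    (hsAC : ∀ t ∈ Set.Icc (0:ℝ) T, s t = b + ∫ τ in (0:ℝ)..t, s' τ)
    (hs'pos : ∀ t ∈ Set.Icc (0:ℝ) T, 0 ≤ s' t)
    (hs'cont : ContinuousOn (fun t : ℝ => t ^ (1 - α) * s' t) (Set.Icc 0 T))
    (v : ℝ → Fin (m + 1) → ℝ) (hv : ContinuousOn v (Set.Icc 0 T)) :
    ∃ g₁ : ℝ → Fin (m + 1) → ℝ,
      (∃ d : ℝ → Fin (m + 1) → ℝ, IntegrableOn d (Set.Icc 0 T) ∧
        ∀ τ ∈ Set.Icc (0:ℝ) T, g₁ τ = g₁ 0 + ∫ p in (0:ℝ)..τ, d p) ∧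
      g₁ 0 = 0 ∧
      ∀ᵐ τ ∂(volume.restrict (Set.Ioo 0 T)),
        g₁ τ = ∫ p in (0:ℝ)..τ, ((τ - p) ^ (-α)) • (Dtil s m p τ).mulVec (v p) := by
  have hs_pos := pos_of_eq_add_integral_nonneg hb hsAC hs'pos
  obtain ⟨d, hd, hd_eq⟩ := stmt_8_general hα hsAC hs_pos hs'cont hv
  exact ⟨fun τ => ∫ p in (0 : ℝ)..τ, d p, ⟨d, hd, by simp⟩, by simp,
    (ae_restrict_mem measurableSet_Ioo).mono fun τ hτ => (hd_eq τ (Ioo_subset_Icc_self hτ)).symm⟩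
end

section
/- Let α ∈ (0,1), T > 0, b > 0, and let s : [0,T] → ℝ be absolutely continuous with s(0) = b, ṡ ≥ 0, and t ↦ t^{1−α} ṡ(t) continuous on [0,T]. Then there exists a constant c₀ = c₀(α) such that: (i) lim_{t₂ → t₁⁺} Q_{1,1}(t₁,t₂) = 0 for every t₁ ≥ 0; (ii) |Q_{1,1}(0,t)| ≤ c₀ [s(t) − s(0)] for all t ∈ (0,T]; (iii) |Q_{1,2}(t₁,t₂)| ≤ c₀ |t₂ − t₁|^α for all 0 ≤ t₁ < t₂ ≤ T. -/
open MeasureTheory Set Filter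
open scoped Topology

/-- `Q_{1,1}(t₁,t₂) = t₂^{1−α} ∫_{t₁}^{t₂} (t₂−τ)^{α−1}
∫₀^τ (τ−p)^{−α−1}[s(τ)−s(p)] p^{α−1} dp dτ`. -/
noncomputable def Q11 (α : ℝ) (s : ℝ → ℝ) (t₁ t₂ : ℝ) : ℝ :=
  t₂ ^ (1 - α) * ∫ τ in t₁..t₂, (t₂ - τ) ^ (α - 1) *
    ∫ p in (0:ℝ)..τ, (τ - p) ^ (-α - 1) * (s τ - s p) * p ^ (α - 1)

/-- `Q_{1,2}(t₁,t₂) = t₂^{1−α} ∫_{t₁}^{t₂} (t₂−τ)^{α−1} τ^{α−1}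
∫₀^τ (τ−p)^{−α} p^{α−1} dp dτ`. -/
noncomputable def Q12 (α : ℝ) (t₁ t₂ : ℝ) : ℝ :=
  t₂ ^ (1 - α) * ∫ τ in t₁..t₂, (t₂ - τ) ^ (α - 1) * τ ^ (α - 1) *
    ∫ p in (0:ℝ)..τ, (τ - p) ^ (-α) * p ^ (α - 1)

/-!
Write `B` for the Beta function. The inner integral of `Q12` is the constant `B(α, 1 - α)`, and its
outer one is `O((t₂ - t₁) ^ α)`. If `t ^ (1 - α) s' t` is bounded, then `|s τ - s p|` is at most a
multiple of `τ ^ (α - 1) (τ - p)`, so a multiple of the integrand of `Q12` dominates that of `Q11`.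

For `Q11 α s 0 t` the increment of `s` must survive on the right-hand side, so write
`|s τ - s p| ≤ μ (p, τ)` with `μ = |s'| dx` and apply Tonelli twice. The result is an integral
`∫₀ᵗ K(x, t) dμ(x)`, where in `K` the singular kernel `(τ - p) ^ (-α - 1)` has been integrated only
over `p < x < τ`; this `K` is the constant `α⁻¹ B(α, 1 - α)`.
-/

open scoped ENNReal
open ProbabilityTheory (beta beta_pos lintegral_betaPDF lintegral_betaPDF_eq_one)

section LIntegral

lemma setLIntegral_Ioo_eq_lintegral_deriv_mul {f f' : ℝ → ℝ} {a b : ℝ} (hab : a ≤ b)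
    (hf : ContinuousOn f (Icc a b)) (hf' : ∀ x ∈ Ioo a b, HasDerivAt f (f' x) x)
    (hpos : ∀ x ∈ Ioo a b, 0 < f' x) (g : ℝ → ℝ≥0∞) :
    ∫⁻ y in Ioo (f a) (f b), g y = ∫⁻ x in Ioo a b, ENNReal.ofReal (f' x) * g (f x) := by
  have hmono : StrictMonoOn f (Icc a b) := by
    refine strictMonoOn_of_deriv_pos (convex_Icc a b) hf fun x hx => ?_
    rw [interior_Icc] at hx
    rw [(hf' x hx).deriv]
    exact hpos x hx
  have himage : f '' Ioo a b = Ioo (f a) (f b) := by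
    refine (image_subset_iff.2 fun x hx => ?_).antisymm (intermediate_value_Ioo hab hf)
    have hx' := Ioo_subset_Icc_self hx
    exact ⟨hmono (left_mem_Icc.2 hab) hx' hx.1, hmono hx' (right_mem_Icc.2 hab) hx.2⟩
  rw [← himage]
  exact lintegral_image_eq_lintegral_deriv_mul_of_monotoneOn measurableSet_Ioo
    (fun x hx => (hf' x hx).hasDerivWithinAt) (hmono.monotoneOn.mono Ioo_subset_Icc_self) g

lemma setLIntegral_Ioo_ofReal_deriv {f f' : ℝ → ℝ} {a b : ℝ} (hab : a ≤ b)
    (hf : ContinuousOn f (Icc a b)) (hf' : ∀ x ∈ Ioo a b, HasDerivAt f (f' x) x)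
    (hpos : ∀ x ∈ Ioo a b, 0 < f' x) :
    ∫⁻ x in Ioo a b, ENNReal.ofReal (f' x) = ENNReal.ofReal (f b - f a) := by
  simpa using (setLIntegral_Ioo_eq_lintegral_deriv_mul hab hf hf' hpos 1).symm

lemma lintegral_Ioo_lintegral_Ioo_swap {X : Type*} [LinearOrder X] [TopologicalSpace X]
    [OrderClosedTopology X] [SecondCountableTopology X] [MeasurableSpace X]
    [OpensMeasurableSpace X] {μ ν : Measure X} [SFinite μ] [SFinite ν] {k : X → X → ℝ≥0∞}
    (hk : Measurable (Function.uncurry k)) (a b : X) :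
    ∫⁻ p in Ioo a b, ∫⁻ x in Ioo p b, k p x ∂ν ∂μ =
      ∫⁻ x in Ioo a b, ∫⁻ p in Ioo a x, k p x ∂μ ∂ν := by
  have hswap : ∫⁻ p in Ioo a b, ∫⁻ x in Ioo a b, (Ioi p).indicator (k p) x ∂ν ∂μ =
      ∫⁻ x in Ioo a b, ∫⁻ p in Ioo a b, (Iio x).indicator (k · x) p ∂μ ∂ν :=
    lintegral_lintegral_swap
      (hk.indicator (measurableSet_lt measurable_fst measurable_snd)).aemeasurable
  convert hswap using 1
  · refine setLIntegral_congr_fun measurableSet_Ioo fun p hp => ?_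
    rw [setLIntegral_indicator measurableSet_Ioi, Ioi_inter_Ioo, max_eq_left hp.1.le]
  · refine setLIntegral_congr_fun measurableSet_Ioo fun x hx => ?_
    rw [setLIntegral_indicator measurableSet_Iio, Iio_inter_Ioo, min_eq_left hx.2.le]

lemma enorm_intervalIntegral_le {a b : ℝ} (hab : a ≤ b) (f : ℝ → ℝ) :
    ‖∫ x in a..b, f x‖ₑ ≤ ∫⁻ x in Ioo a b, ‖f x‖ₑ := by
  rw [intervalIntegral.integral_of_le hab, integral_Ioc_eq_integral_Ioo]
  exact enorm_integral_le_lintegral_enorm _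

lemma abs_intervalIntegral_le_of_abs_le {f g : ℝ → ℝ} {a b C : ℝ} (hab : a ≤ b) (hC : 0 ≤ C)
    (hfg : ∀ x ∈ Ioo a b, |f x| ≤ g x)
    (hg : ∫⁻ x in Ioo a b, ENNReal.ofReal (g x) ≤ ENNReal.ofReal C) :
    |∫ x in a..b, f x| ≤ C := by
  rw [← ENNReal.ofReal_le_ofReal_iff hC, ← Real.enorm_eq_ofReal_abs]
  refine (enorm_intervalIntegral_le hab f).trans (le_trans ?_ hg)
  refine setLIntegral_mono' measurableSet_Ioo fun x hx => ?_
  rw [Real.enorm_eq_ofReal_abs]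
  exact ENNReal.ofReal_le_ofReal (hfg x hx)

end LIntegral

section BetaIntegral

variable {u v : ℝ}

lemma beta_comm (u v : ℝ) : beta u v = beta v u := by
  simp only [beta, mul_comm, add_comm]

lemma setLIntegral_Ioo_zero_one_eq_beta (hu : 0 < u) (hv : 0 < v) :
    ∫⁻ x in Ioo (0 : ℝ) 1, ENNReal.ofReal (x ^ (u - 1) * (1 - x) ^ (v - 1)) =
      ENNReal.ofReal (beta u v) := by
  have hpdf := lintegral_betaPDF_eq_one hu hv
  have hB := beta_pos hu hv
  simp only [lintegral_betaPDF, mul_assoc, ENNReal.ofReal_mul (one_div_pos.2 hB).le] at hpdf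
  rw [lintegral_const_mul' _ _ ENNReal.ofReal_ne_top, one_div, ENNReal.ofReal_inv_of_pos hB]
    at hpdf
  exact (inv_injective (ENNReal.eq_inv_of_mul_eq_one_left hpdf)).symm

lemma setLIntegral_Ioo_comp_eq_beta (hu : 0 < u) (hv : 0 < v) {f f' : ℝ → ℝ} {a b : ℝ}
    (hab : a ≤ b) (hf : ContinuousOn f (Icc a b))
    (hf' : ∀ x ∈ Ioo a b, HasDerivAt f (f' x) x) (hpos : ∀ x ∈ Ioo a b, 0 < f' x)
    (ha : f a = 0) (hb : f b = 1) :
    ∫⁻ x in Ioo a b, ENNReal.ofReal (f' x * (f x ^ (u - 1) * (1 - f x) ^ (v - 1))) =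
      ENNReal.ofReal (beta u v) := by
  have hsubst := setLIntegral_Ioo_eq_lintegral_deriv_mul hab hf hf' hpos
    fun y => ENNReal.ofReal (y ^ (u - 1) * (1 - y) ^ (v - 1))
  rw [ha, hb, setLIntegral_Ioo_zero_one_eq_beta hu hv] at hsubst
  rw [hsubst]
  exact setLIntegral_congr_fun measurableSet_Ioo fun x hx => ENNReal.ofReal_mul (hpos x hx).le

lemma setLIntegral_Ioo_rpow_mul_sub_rpow (hu : 0 < u) (hv : 0 < v) {t : ℝ} (ht : 0 < t) :
    ∫⁻ p in Ioo 0 t, ENNReal.ofReal (p ^ (u - 1) * (t - p) ^ (v - 1)) =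
      ENNReal.ofReal (t ^ (u + v - 1) * beta u v) := by
  rw [ENNReal.ofReal_mul (by positivity), ← setLIntegral_Ioo_comp_eq_beta hu hv (f := (· / t))
    ht.le (by fun_prop) (fun x _ => (hasDerivAt_id x).div_const t) (fun _ _ => by positivity)
    (zero_div t) (div_self ht.ne'), ← lintegral_const_mul' _ _ ENNReal.ofReal_ne_top]
  refine setLIntegral_congr_fun measurableSet_Ioo fun p hp => ?_
  obtain ⟨hp0, hpt⟩ := hp
  have htp : 0 < t - p := sub_pos.2 hpt
  rw [← ENNReal.ofReal_mul (by positivity), one_sub_div ht.ne', Real.div_rpow hp0.le ht.le,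
    Real.div_rpow htp.le ht.le]
  simp only [Real.rpow_sub ht, Real.rpow_add ht, Real.rpow_one]
  congr 1
  field_simp

-- The Möbius substitution `τ ↦ t (τ - x) / (τ (t - x))`, sending `x` to `0` and `t` to `1`.
lemma setLIntegral_Ioo_sub_rpow_mul_sub_rpow_mul_rpow (hu : 0 < u) (hv : 0 < v) {x t : ℝ}
    (hx : 0 < x) (hxt : x < t) :
    ∫⁻ τ in Ioo x t, ENNReal.ofReal ((τ - x) ^ (u - 1) * (t - τ) ^ (v - 1) * τ ^ (-(u + v))) =
      ENNReal.ofReal ((t - x) ^ (u + v - 1) * t ^ (-u) * x ^ (-v) * beta u v) := by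
  have ht : 0 < t := hx.trans hxt
  have htx : 0 < t - x := sub_pos.2 hxt
  have hpos : ∀ τ ∈ Icc x t, 0 < τ := fun τ hτ => hx.trans_le hτ.1
  have hcont : ContinuousOn (fun τ => t * (τ - x) / (τ * (t - x))) (Icc x t) :=
    ContinuousOn.div (by fun_prop) (by fun_prop) fun τ hτ => (mul_pos (hpos τ hτ) htx).ne'
  have hderiv : ∀ τ ∈ Ioo x t, HasDerivAt (fun τ => t * (τ - x) / (τ * (t - x)))
      (t * x / (τ ^ 2 * (t - x))) τ := by
    intro τ hτ
    have hτ0 := hpos τ (Ioo_subset_Icc_self hτ)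
    refine ((((hasDerivAt_id τ).sub_const x).const_mul t).div
      ((hasDerivAt_id τ).mul_const (t - x)) (mul_pos hτ0 htx).ne').congr_deriv ?_
    simp only [id]
    field_simp
    ring
  rw [ENNReal.ofReal_mul (by positivity), ← setLIntegral_Ioo_comp_eq_beta hu hv hxt.le hcont hderiv
    (fun τ hτ => have := hpos τ (Ioo_subset_Icc_self hτ); by positivity) (by simp) (by field_simp),
    ← lintegral_const_mul' _ _ ENNReal.ofReal_ne_top]
  refine setLIntegral_congr_fun measurableSet_Ioo fun τ hτ => ?_
  have hτ0 := hpos τ (Ioo_subset_Icc_self hτ)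
  have hxτ : 0 < τ - x := sub_pos.2 hτ.1
  have hτt : 0 < t - τ := sub_pos.2 hτ.2
  have hcompl : 1 - t * (τ - x) / (τ * (t - x)) = x * (t - τ) / (τ * (t - x)) := by
    field_simp
    ring
  rw [← ENNReal.ofReal_mul (by positivity), hcompl, Real.div_rpow (by positivity) (by positivity),
    Real.div_rpow (by positivity) (by positivity), Real.mul_rpow ht.le hxτ.le,
    Real.mul_rpow hx.le hτt.le, Real.mul_rpow hτ0.le htx.le, Real.mul_rpow hτ0.le htx.le]
  simp only [Real.rpow_sub, Real.rpow_add, Real.rpow_neg, Real.rpow_one, hx, hx.le, ht, ht.le,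
    htx, hτ0, hτ0.le, hxτ, hτt]
  congr 1
  field_simp

end BetaIntegral

section Kernels

variable {α : ℝ}

lemma setLIntegral_Ioo_sub_rpow_neg_sub_one_mul_rpow (hα : 0 < α) {x τ : ℝ} (hx : 0 < x)
    (hxτ : x < τ) :
    ∫⁻ p in Ioo 0 x, ENNReal.ofReal ((τ - p) ^ (-α - 1) * p ^ (α - 1)) =
      ENNReal.ofReal (α⁻¹ * τ⁻¹ * x ^ α * (τ - x) ^ (-α)) := by
  have hτ : 0 < τ := hx.trans hxτ
  have hpos : ∀ p ∈ Ioo 0 x, 0 < τ - p := fun p hp => sub_pos.2 (hp.2.trans hxτ)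
  have hcont : ContinuousOn (fun p => α⁻¹ * τ⁻¹ * p ^ α * (τ - p) ^ (-α)) (Icc 0 x) := by
    refine ContinuousOn.mul ?_ (ContinuousOn.rpow_const (by fun_prop) fun p hp => Or.inl ?_)
    · exact continuousOn_const.mul (Real.continuous_rpow_const hα.le).continuousOn
    · exact (sub_pos.2 (hp.2.trans_lt hxτ)).ne'
  have hderiv : ∀ p ∈ Ioo 0 x, HasDerivAt (fun p => α⁻¹ * τ⁻¹ * p ^ α * (τ - p) ^ (-α))
      ((τ - p) ^ (-α - 1) * p ^ (α - 1)) p := by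
    intro p hp
    have hp0 : 0 < p := hp.1
    have hτp := hpos p hp
    refine (((Real.hasDerivAt_rpow_const (Or.inl hp0.ne')).const_mul (α⁻¹ * τ⁻¹)).mul
      (((hasDerivAt_id p).const_sub τ).rpow_const (Or.inl hτp.ne'))).congr_deriv ?_
    simp only [id, Real.rpow_sub_one hp0.ne', Real.rpow_sub_one hτp.ne']
    field_simp
    ring
  rw [setLIntegral_Ioo_ofReal_deriv hx.le hcont hderiv fun p hp =>
    mul_pos (Real.rpow_pos_of_pos (hpos p hp) _) (Real.rpow_pos_of_pos hp.1 _)]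
  simp [Real.zero_rpow hα.ne']

lemma setLIntegral_Ioo_iterated_kernel (hα₀ : 0 < α) (hα₁ : α < 1) {x t : ℝ} (hx : 0 < x)
    (hxt : x < t) :
    ∫⁻ τ in Ioo x t, ENNReal.ofReal
        (t ^ (1 - α) * (t - τ) ^ (α - 1) * (α⁻¹ * τ⁻¹ * x ^ α * (τ - x) ^ (-α))) =
      ENNReal.ofReal (α⁻¹ * beta α (1 - α)) := by
  have ht : 0 < t := hx.trans hxt
  have hbeta := setLIntegral_Ioo_sub_rpow_mul_sub_rpow_mul_rpow (sub_pos.2 hα₁) hα₀ hx hxt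
  simp only [sub_add_cancel, sub_self, Real.rpow_zero, one_mul, sub_sub_cancel_left,
    Real.rpow_neg_one] at hbeta
  calc _ = ∫⁻ τ in Ioo x t, ENNReal.ofReal (α⁻¹ * t ^ (1 - α) * x ^ α) *
        ENNReal.ofReal ((τ - x) ^ (-α) * (t - τ) ^ (α - 1) * τ⁻¹) := by
        refine lintegral_congr fun τ => ?_
        rw [← ENNReal.ofReal_mul (by positivity)]
        ring_nf
    _ = _ := by
        rw [lintegral_const_mul' _ _ ENNReal.ofReal_ne_top, hbeta,
          ← ENNReal.ofReal_mul (by positivity), beta_comm, Real.rpow_neg ht.le,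
          Real.rpow_neg hx.le]
        congr 1
        field_simp

-- Write `t₂ = (t₂ - τ) + τ`, so that only one of the two factors is singular in each summand.
lemma sub_rpow_mul_rpow_le (hα : 0 ≤ α) {t₁ t₂ τ : ℝ} (hτ₀ : 0 < τ) (hτ₁ : t₁ ≤ τ)
    (hτ₂ : τ < t₂) :
    (t₂ - τ) ^ (α - 1) * τ ^ (α - 1) ≤
      t₂⁻¹ * ((t₂ - t₁) ^ α * τ ^ (α - 1) + t₂ ^ α * (t₂ - τ) ^ (α - 1)) := by
  have ht₂ : 0 < t₂ := hτ₀.trans hτ₂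
  have hτt : 0 < t₂ - τ := sub_pos.2 hτ₂
  calc (t₂ - τ) ^ (α - 1) * τ ^ (α - 1)
      = t₂⁻¹ * ((t₂ - τ) ^ α * τ ^ (α - 1) + τ ^ α * (t₂ - τ) ^ (α - 1)) := by
        rw [Real.rpow_sub_one hτ₀.ne', Real.rpow_sub_one hτt.ne']
        field_simp
        ring
    _ ≤ _ := by gcongr

lemma setLIntegral_Ioo_sub_rpow_mul_rpow_le (hα : 0 < α) {t₁ t₂ : ℝ} (ht₁ : 0 ≤ t₁)
    (h : t₁ < t₂) :
    ∫⁻ τ in Ioo t₁ t₂, ENNReal.ofReal ((t₂ - τ) ^ (α - 1) * τ ^ (α - 1)) ≤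
      ENNReal.ofReal (2 / α * t₂ ^ (α - 1) * (t₂ - t₁) ^ α) := by
  have ht₂ : 0 < t₂ := ht₁.trans_lt h
  have : 0 < t₂ - t₁ := sub_pos.2 h
  have hcont : Continuous fun x : ℝ => x ^ α := Real.continuous_rpow_const hα.le
  have hpos : ∀ τ ∈ Ioo t₁ t₂, 0 < τ ∧ 0 < t₂ - τ :=
    fun τ hτ => ⟨ht₁.trans_lt hτ.1, sub_pos.2 hτ.2⟩
  let F : ℝ → ℝ := fun τ => t₂⁻¹ * ((t₂ - t₁) ^ α * τ ^ α / α - t₂ ^ α * (t₂ - τ) ^ α / α)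
  let F' : ℝ → ℝ := fun τ =>
    t₂⁻¹ * ((t₂ - t₁) ^ α * τ ^ (α - 1) + t₂ ^ α * (t₂ - τ) ^ (α - 1))
  have hderiv : ∀ τ ∈ Ioo t₁ t₂, HasDerivAt F (F' τ) τ := by
    intro τ hτ
    obtain ⟨hτ0, hτt⟩ := hpos τ hτ
    refine (((((hasDerivAt_id τ).rpow_const (Or.inl hτ0.ne')).const_mul _).div_const α).sub
      (((((hasDerivAt_id τ).const_sub t₂).rpow_const (Or.inl hτt.ne')).const_mul _).div_const
        α) |>.const_mul _).congr_deriv ?_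
    simp only [F', id]
    field_simp
    ring
  have hF : F t₂ - F t₁ ≤ 2 / α * t₂ ^ (α - 1) * (t₂ - t₁) ^ α := by
    have hnonneg : 0 ≤ t₂⁻¹ * ((t₂ - t₁) ^ α * t₁ ^ α / α) := by positivity
    simp only [F, sub_self, Real.zero_rpow hα.ne', Real.rpow_sub_one ht₂.ne']
    linear_combination hnonneg
  calc _ ≤ ∫⁻ τ in Ioo t₁ t₂, ENNReal.ofReal (F' τ) :=
        setLIntegral_mono' measurableSet_Ioo fun τ hτ => ENNReal.ofReal_le_ofReal
          (sub_rpow_mul_rpow_le hα.le (hpos τ hτ).1 hτ.1.le hτ.2)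
    _ = ENNReal.ofReal (F t₂ - F t₁) := by
        refine setLIntegral_Ioo_ofReal_deriv h.le (by fun_prop) hderiv fun τ hτ => ?_
        obtain ⟨hτ0, hτt⟩ := hpos τ hτ
        positivity
    _ ≤ _ := ENNReal.ofReal_le_ofReal hF

end Kernels

section Estimates

variable {α : ℝ}

lemma abs_rpow_mul_integral_sub_rpow_mul_le (hα : 0 < α) {t₁ t₂ K : ℝ} (ht₁ : 0 ≤ t₁)
    (h : t₁ < t₂) (hK : 0 ≤ K) {g : ℝ → ℝ} (hg : ∀ τ ∈ Ioo t₁ t₂, |g τ| ≤ K * τ ^ (α - 1)) :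
    |t₂ ^ (1 - α) * ∫ τ in t₁..t₂, (t₂ - τ) ^ (α - 1) * g τ| ≤ 2 / α * K * (t₂ - t₁) ^ α := by
  have ht₂ : 0 < t₂ := ht₁.trans_lt h
  have : 0 < t₂ - t₁ := sub_pos.2 h
  have hint : |∫ τ in t₁..t₂, (t₂ - τ) ^ (α - 1) * g τ| ≤
      K * (2 / α * t₂ ^ (α - 1) * (t₂ - t₁) ^ α) := by
    refine abs_intervalIntegral_le_of_abs_le h.le (by positivity)
      (g := fun τ => K * ((t₂ - τ) ^ (α - 1) * τ ^ (α - 1))) (fun τ hτ => ?_) ?_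
    · have hτt : 0 < t₂ - τ := sub_pos.2 hτ.2
      rw [abs_mul, abs_of_pos (Real.rpow_pos_of_pos hτt _), mul_left_comm]
      gcongr
      exact hg τ hτ
    · simp only [ENNReal.ofReal_mul hK]
      rw [lintegral_const_mul' _ _ ENNReal.ofReal_ne_top]
      gcongr
      exact setLIntegral_Ioo_sub_rpow_mul_rpow_le hα ht₁ h
  have hcancel : t₂ ^ (1 - α) * t₂ ^ (α - 1) = 1 := by
    rw [← Real.rpow_add ht₂, sub_add_sub_cancel, sub_self, Real.rpow_zero]
  rw [abs_mul, abs_of_pos (Real.rpow_pos_of_pos ht₂ _)]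
  calc _ ≤ t₂ ^ (1 - α) * (K * (2 / α * t₂ ^ (α - 1) * (t₂ - t₁) ^ α)) := by gcongr
    _ = _ := by linear_combination 2 / α * K * (t₂ - t₁) ^ α * hcancel

lemma setLIntegral_Ioo_sub_rpow_neg_mul_rpow (hα₀ : 0 < α) (hα₁ : α < 1) {τ : ℝ} (hτ : 0 < τ) :
    ∫⁻ p in Ioo 0 τ, ENNReal.ofReal ((τ - p) ^ (-α) * p ^ (α - 1)) =
      ENNReal.ofReal (beta α (1 - α)) := by
  have hbeta := setLIntegral_Ioo_rpow_mul_sub_rpow hα₀ (sub_pos.2 hα₁) hτ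
  simpa only [add_sub_cancel, sub_self, Real.rpow_zero, one_mul, sub_sub_cancel_left,
    mul_comm (_ ^ (α - 1))] using hbeta

lemma abs_Q12_le (hα₀ : 0 < α) (hα₁ : α < 1) {t₁ t₂ : ℝ} (ht₁ : 0 ≤ t₁) (h : t₁ < t₂) :
    |Q12 α t₁ t₂| ≤ 2 / α * beta α (1 - α) * (t₂ - t₁) ^ α := by
  have hB : 0 < beta α (1 - α) := beta_pos hα₀ (sub_pos.2 hα₁)
  simp only [Q12, mul_assoc]
  refine (abs_rpow_mul_integral_sub_rpow_mul_le hα₀ ht₁ h hB.le fun τ hτ => ?_).trans_eq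
    (mul_assoc _ _ _)
  have hτ0 : 0 < τ := ht₁.trans_lt hτ.1
  rw [abs_mul, abs_of_pos (Real.rpow_pos_of_pos hτ0 _), mul_comm]
  gcongr
  refine abs_intervalIntegral_le_of_abs_le hτ0.le hB.le (fun p hp => ?_)
    (setLIntegral_Ioo_sub_rpow_neg_mul_rpow hα₀ hα₁ hτ0).le
  have hp0 : 0 < p := hp.1
  have hτp : 0 < τ - p := sub_pos.2 hp.2
  exact (abs_of_pos (by positivity)).le

lemma abs_Q11_le (hα₀ : 0 < α) (hα₁ : α < 1) {t₁ t₂ L : ℝ} (ht₁ : 0 ≤ t₁) (h : t₁ < t₂)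
    (hL : 0 ≤ L) {s : ℝ → ℝ}
    (hs : ∀ p τ, 0 < p → p < τ → τ < t₂ → |s τ - s p| ≤ L * (τ ^ (α - 1) * (τ - p))) :
    |Q11 α s t₁ t₂| ≤ 2 / α * (L * beta α (1 - α)) * (t₂ - t₁) ^ α := by
  have hB : 0 < beta α (1 - α) := beta_pos hα₀ (sub_pos.2 hα₁)
  refine abs_rpow_mul_integral_sub_rpow_mul_le hα₀ ht₁ h (by positivity) fun τ hτ => ?_
  have hτ0 : 0 < τ := ht₁.trans_lt hτ.1
  refine abs_intervalIntegral_le_of_abs_le hτ0.le (by positivity)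
    (g := fun p => L * τ ^ (α - 1) * ((τ - p) ^ (-α) * p ^ (α - 1))) (fun p hp => ?_) ?_
  · have hp0 : 0 < p := hp.1
    have hτp : 0 < τ - p := sub_pos.2 hp.2
    rw [abs_mul, abs_mul, abs_of_pos (Real.rpow_pos_of_pos hτp _),
      abs_of_pos (Real.rpow_pos_of_pos hp0 _)]
    calc _ ≤ (τ - p) ^ (-α - 1) * (L * (τ ^ (α - 1) * (τ - p))) * p ^ (α - 1) := by
          gcongr
          exact hs p τ hp0 hp.2 hτ.2
      _ = _ := by
          rw [Real.rpow_sub_one hτp.ne']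
          field_simp
  · simp only [ENNReal.ofReal_mul (mul_nonneg hL (Real.rpow_nonneg hτ0.le (α - 1)))]
    rw [lintegral_const_mul' _ _ ENNReal.ofReal_ne_top,
      setLIntegral_Ioo_sub_rpow_neg_mul_rpow hα₀ hα₁ hτ0, ← ENNReal.ofReal_mul (by positivity),
      mul_right_comm]

lemma tendsto_Q11 (hα₀ : 0 < α) (hα₁ : α < 1) {t₁ T L : ℝ} (ht₁ : 0 ≤ t₁) (hL : 0 ≤ L)
    {s : ℝ → ℝ}
    (hs : ∀ p τ, 0 < p → p < τ → τ ≤ T → |s τ - s p| ≤ L * (τ ^ (α - 1) * (τ - p))) :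
    Tendsto (fun t₂ => Q11 α s t₁ t₂) (𝓝[Ioc t₁ T] t₁) (𝓝 0) := by
  have hcont : Continuous fun t₂ => 2 / α * (L * beta α (1 - α)) * (t₂ - t₁) ^ α :=
    continuous_const.mul ((Real.continuous_rpow_const hα₀.le).comp (continuous_sub_right t₁))
  have hlim : Tendsto (fun t₂ => 2 / α * (L * beta α (1 - α)) * (t₂ - t₁) ^ α)
      (𝓝[Ioc t₁ T] t₁) (𝓝 0) :=
    (hcont.tendsto' t₁ 0 (by simp [Real.zero_rpow hα₀.ne'])).mono_left nhdsWithin_le_nhds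
  refine squeeze_zero_norm' ?_ hlim
  filter_upwards [self_mem_nhdsWithin] with t₂ ht₂
  exact abs_Q11_le hα₀ hα₁ ht₁ ht₂.1 hL fun p τ hp hpτ hτ => hs p τ hp hpτ (hτ.le.trans ht₂.2)

lemma enorm_integral_sub_rpow_mul_sub_le (hα : 0 < α) {τ : ℝ} (hτ : 0 < τ) {s : ℝ → ℝ}
    {μ : Measure ℝ} [SFinite μ] (hs : ∀ p ∈ Ioo 0 τ, ‖s τ - s p‖ₑ ≤ μ (Ioo p τ)) :
    ‖∫ p in 0..τ, (τ - p) ^ (-α - 1) * (s τ - s p) * p ^ (α - 1)‖ₑ ≤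
      ∫⁻ x in Ioo 0 τ, ENNReal.ofReal (α⁻¹ * τ⁻¹ * x ^ α * (τ - x) ^ (-α)) ∂μ := by
  set k : ℝ → ℝ≥0∞ := fun p => ENNReal.ofReal ((τ - p) ^ (-α - 1) * p ^ (α - 1))
  calc _ ≤ ∫⁻ p in Ioo 0 τ, ‖(τ - p) ^ (-α - 1) * (s τ - s p) * p ^ (α - 1)‖ₑ :=
        enorm_intervalIntegral_le hτ.le _
    _ ≤ ∫⁻ p in Ioo 0 τ, ∫⁻ _ in Ioo p τ, k p ∂μ := by
        refine setLIntegral_mono' measurableSet_Ioo fun p hp => ?_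
        have hp0 : 0 < p := hp.1
        have hτp : 0 < τ - p := sub_pos.2 hp.2
        rw [setLIntegral_const, mul_right_comm, enorm_mul, Real.enorm_of_nonneg (by positivity)]
        gcongr
        exact hs p hp
    _ = ∫⁻ x in Ioo 0 τ, (∫⁻ p in Ioo 0 x, k p) ∂μ :=
        lintegral_Ioo_lintegral_Ioo_swap (by unfold Function.uncurry; fun_prop) 0 τ
    _ = _ := setLIntegral_congr_fun measurableSet_Ioo fun x hx =>
        setLIntegral_Ioo_sub_rpow_neg_sub_one_mul_rpow hα hx.1 hx.2

lemma enorm_Q11_zero_le (hα₀ : 0 < α) (hα₁ : α < 1) {t : ℝ} (ht : 0 < t) {s : ℝ → ℝ}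
    {μ : Measure ℝ} [SFinite μ]
    (hs : ∀ p τ, 0 < p → p < τ → τ < t → ‖s τ - s p‖ₑ ≤ μ (Ioo p τ)) :
    ‖Q11 α s 0 t‖ₑ ≤ ENNReal.ofReal (α⁻¹ * beta α (1 - α)) * μ (Ioo 0 t) := by
  set k : ℝ → ℝ → ℝ≥0∞ := fun x τ => ENNReal.ofReal
    (t ^ (1 - α) * (t - τ) ^ (α - 1) * (α⁻¹ * τ⁻¹ * x ^ α * (τ - x) ^ (-α))) with hk
  calc ‖Q11 α s 0 t‖ₑ
      ≤ ∫⁻ τ in Ioo 0 t, ‖t ^ (1 - α) * (t - τ) ^ (α - 1)‖ₑ *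
          ‖∫ p in 0..τ, (τ - p) ^ (-α - 1) * (s τ - s p) * p ^ (α - 1)‖ₑ := by
        simp only [Q11, ← intervalIntegral.integral_const_mul, ← mul_assoc, ← enorm_mul]
        exact enorm_intervalIntegral_le ht.le _
    _ ≤ ∫⁻ τ in Ioo 0 t, ∫⁻ x in Ioo 0 τ, k x τ ∂μ := by
        refine setLIntegral_mono' measurableSet_Ioo fun τ hτ => ?_
        have hτt : 0 < t - τ := sub_pos.2 hτ.2
        have hnonneg : 0 ≤ t ^ (1 - α) * (t - τ) ^ (α - 1) := by positivity
        simp only [hk, ENNReal.ofReal_mul hnonneg]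
        rw [lintegral_const_mul' _ _ ENNReal.ofReal_ne_top, Real.enorm_of_nonneg hnonneg]
        gcongr
        exact enorm_integral_sub_rpow_mul_sub_le hα₀ hτ.1 fun p hp => hs p τ hp.1 hp.2 hτ.2
    _ = ∫⁻ x in Ioo 0 t, (∫⁻ τ in Ioo x t, k x τ) ∂μ :=
        (lintegral_Ioo_lintegral_Ioo_swap (by unfold Function.uncurry; fun_prop) 0 t).symm
    _ = ∫⁻ _ in Ioo 0 t, ENNReal.ofReal (α⁻¹ * beta α (1 - α)) ∂μ :=
        setLIntegral_congr_fun measurableSet_Ioo fun x hx =>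
          setLIntegral_Ioo_iterated_kernel hα₀ hα₁ hx.1 hx.2
    _ = _ := setLIntegral_const _ _

lemma abs_Q11_zero_le (hα₀ : 0 < α) (hα₁ : α < 1) {t : ℝ} (ht : 0 < t) {s s' : ℝ → ℝ}
    (hint : IntervalIntegrable s' volume 0 t)
    (hs : ∀ p τ, 0 < p → p < τ → τ < t → s τ - s p = ∫ x in p..τ, s' x) :
    |Q11 α s 0 t| ≤ α⁻¹ * beta α (1 - α) * ∫ x in 0..t, |s' x| := by
  have hB : 0 < beta α (1 - α) := beta_pos hα₀ (sub_pos.2 hα₁)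
  have hnonneg : 0 ≤ ∫ x in 0..t, |s' x| :=
    intervalIntegral.integral_nonneg ht.le fun _ _ => abs_nonneg _
  set μ : Measure ℝ := volume.withDensity (‖s' ·‖ₑ)
  have hμ_Ioo : ∀ p τ, μ (Ioo p τ) = ∫⁻ x in Ioo p τ, ‖s' x‖ₑ := fun p τ =>
    withDensity_apply _ measurableSet_Ioo
  have hμ_t : μ (Ioo 0 t) = ENNReal.ofReal (∫ x in 0..t, |s' x|) := by
    rw [hμ_Ioo, intervalIntegral.integral_of_le ht.le, integral_Ioc_eq_integral_Ioo]
    exact (ofReal_integral_norm_eq_lintegral_enorm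
      ((intervalIntegrable_iff_integrableOn_Ioo_of_le ht.le).1 hint)).symm
  rw [← ENNReal.ofReal_le_ofReal_iff (by positivity), ← Real.enorm_eq_ofReal_abs,
    ENNReal.ofReal_mul (by positivity), ← hμ_t]
  refine enorm_Q11_zero_le hα₀ hα₁ ht fun p τ hp hpτ hτ => ?_
  rw [hs p τ hp hpτ hτ, hμ_Ioo]
  exact enorm_intervalIntegral_le hpτ.le s'

lemma rpow_sub_rpow_le (hα₁ : α ≤ 1) {p τ : ℝ} (hp : 0 < p) (hpτ : p ≤ τ) :
    τ ^ α - p ^ α ≤ τ ^ (α - 1) * (τ - p) := by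
  have hτ : 0 < τ := hp.trans_le hpτ
  calc τ ^ α - p ^ α = τ ^ (α - 1) * τ - p ^ (α - 1) * p := by
        rw [← Real.rpow_add_one hτ.ne', ← Real.rpow_add_one hp.ne', sub_add_cancel]
    _ ≤ τ ^ (α - 1) * τ - τ ^ (α - 1) * p := by
        refine sub_le_sub_left (mul_le_mul_of_nonneg_right ?_ hp.le) _
        exact Real.rpow_le_rpow_of_nonpos hp hpτ (sub_nonpos.2 hα₁)
    _ = _ := by ring

lemma abs_integral_le_rpow_mul_sub (hα₀ : 0 < α) (hα₁ : α ≤ 1) {f : ℝ → ℝ} {p τ M : ℝ}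
    (hp : 0 < p) (hpτ : p ≤ τ) (hM : 0 ≤ M)
    (hf : ∀ x ∈ Ioc p τ, |x ^ (1 - α) * f x| ≤ M) :
    |∫ x in p..τ, f x| ≤ M / α * (τ ^ (α - 1) * (τ - p)) := by
  have hexp : -1 < α - 1 := by linarith
  have hbound : ∀ x ∈ Ioc p τ, |f x| ≤ M * x ^ (α - 1) := by
    intro x hx
    have hx0 : 0 < x := hp.trans hx.1
    have hle := hf x hx
    rwa [abs_mul, abs_of_pos (Real.rpow_pos_of_pos hx0 _), ← neg_sub, Real.rpow_neg hx0.le,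
      inv_mul_le_iff₀' (by positivity)] at hle
  calc |∫ x in p..τ, f x| ≤ ∫ x in p..τ, M * x ^ (α - 1) := by
        rw [← Real.norm_eq_abs]
        exact intervalIntegral.norm_integral_le_of_norm_le hpτ (ae_of_all _ hbound)
          ((intervalIntegral.intervalIntegrable_rpow' hexp).const_mul M)
    _ = M / α * (τ ^ α - p ^ α) := by
        rw [intervalIntegral.integral_const_mul, integral_rpow (Or.inl hexp), sub_add_cancel]
        ring
    _ ≤ _ := by
        gcongr
        exact rpow_sub_rpow_le hα₁ hp hpτ

lemma sub_eq_integral_of_eq_add_integral {s s' : ℝ → ℝ} {b T : ℝ}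
    (hint : IntegrableOn s' (Icc 0 T)) (hs : ∀ t ∈ Icc 0 T, s t = b + ∫ x in 0..t, s' x)
    {p q : ℝ} (hp : p ∈ Icc 0 T) (hq : q ∈ Icc 0 T) : s q - s p = ∫ x in p..q, s' x := by
  have hint' : ∀ t ∈ Icc 0 T, IntervalIntegrable s' volume 0 t := fun t ht =>
    (intervalIntegrable_iff_integrableOn_Icc_of_le ht.1).2
      (hint.mono_set (Icc_subset_Icc_right ht.2))
  rw [hs q hq, hs p hp, add_sub_add_left_eq_sub,
    intervalIntegral.integral_interval_sub_left (hint' q hq) (hint' p hp)]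

lemma integral_abs_eq_sub_of_eq_add_integral {s s' : ℝ → ℝ} {b T : ℝ}
    (hint : IntegrableOn s' (Icc 0 T)) (hs : ∀ t ∈ Icc 0 T, s t = b + ∫ x in 0..t, s' x)
    (hs' : ∀ t ∈ Icc 0 T, 0 ≤ s' t) {p q : ℝ} (hp : p ∈ Icc 0 T) (hq : q ∈ Icc 0 T) :
    ∫ x in p..q, |s' x| = s q - s p := by
  rw [sub_eq_integral_of_eq_add_integral hint hs hp hq]
  exact intervalIntegral.integral_congr fun x hx =>
    abs_of_nonneg (hs' x (uIcc_subset_Icc hp hq hx))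

end Estimates

theorem stmt_10_general (α : ℝ) (hα : α ∈ Ioo 0 1) :
    ∃ c₀ > 0, ∀ (T b : ℝ) (s s' : ℝ → ℝ),
      IntegrableOn s' (Icc 0 T) →
      (∀ t ∈ Icc 0 T, s t = b + ∫ τ in 0..t, s' τ) →
      ((∃ M, ∀ t ∈ Icc 0 T, |t ^ (1 - α) * s' t| ≤ M) →
          ∀ t₁ ∈ Ico 0 T, Tendsto (fun t₂ => Q11 α s t₁ t₂) (𝓝[Ioc t₁ T] t₁) (𝓝 0)) ∧
        (∀ t ∈ Ioc 0 T, |Q11 α s 0 t| ≤ c₀ * ∫ τ in 0..t, |s' τ|) ∧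
        (∀ t₁ t₂ : ℝ, 0 ≤ t₁ → t₁ < t₂ → |Q12 α t₁ t₂| ≤ c₀ * |t₂ - t₁| ^ α) := by
  obtain ⟨hα₀, hα₁⟩ := hα
  have hB : 0 < beta α (1 - α) := beta_pos hα₀ (sub_pos.2 hα₁)
  refine ⟨2 / α * beta α (1 - α), by positivity, fun T b s s' hint hs => ⟨?_, ?_, ?_⟩⟩
  · rintro ⟨M, hM⟩ t₁ ⟨ht₁, ht₁T⟩
    have hM₀ : 0 ≤ M := (abs_nonneg _).trans (hM t₁ ⟨ht₁, ht₁T.le⟩)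
    refine tendsto_Q11 hα₀ hα₁ ht₁ (div_nonneg hM₀ hα₀.le) fun p τ hp hpτ hτ => ?_
    rw [sub_eq_integral_of_eq_add_integral hint hs ⟨hp.le, hpτ.le.trans hτ⟩
      ⟨(hp.trans hpτ).le, hτ⟩]
    exact abs_integral_le_rpow_mul_sub hα₀ hα₁.le hp hpτ.le hM₀ fun x hx =>
      hM x ⟨(hp.trans hx.1).le, hx.2.trans hτ⟩
  · rintro t ⟨ht, htT⟩
    have hint_t : IntervalIntegrable s' volume 0 t :=
      (intervalIntegrable_iff_integrableOn_Icc_of_le ht.le).2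
        (hint.mono_set (Icc_subset_Icc_right htT))
    refine (abs_Q11_zero_le hα₀ hα₁ ht hint_t fun p τ hp hpτ hτ =>
      sub_eq_integral_of_eq_add_integral hint hs ⟨hp.le, (hpτ.trans hτ).le.trans htT⟩
        ⟨(hp.trans hpτ).le, hτ.le.trans htT⟩).trans ?_
    have hα_inv : α⁻¹ ≤ 2 / α := by
      rw [inv_eq_one_div]
      gcongr
      norm_num
    gcongr
    exact intervalIntegral.integral_nonneg ht.le fun _ _ => abs_nonneg _
  · intro t₁ t₂ ht₁ h
    rw [abs_of_pos (sub_pos.2 h)]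
    exact abs_Q12_le hα₀ hα₁ ht₁ h

/-- There is a constant `c₀ = c₀(α)` such that for any admissible `s`:
(i) `Q_{1,1}(t₁,t₂) → 0` as `t₂ → t₁⁺` for every `t₁ ≥ 0`;
(ii) `|Q_{1,1}(0,t)| ≤ c₀ [s(t) − s(0)]`;
(iii) `|Q_{1,2}(t₁,t₂)| ≤ c₀ |t₂ − t₁|^α`. -/
theorem stmt_10 (α : ℝ) (hα : α ∈ Set.Ioo (0:ℝ) 1) :
    ∃ c₀ > (0:ℝ), ∀ T b : ℝ, 0 < T → 0 < b → ∀ s s' : ℝ → ℝ,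
      IntegrableOn s' (Set.Icc 0 T) →
      (∀ t ∈ Set.Icc (0:ℝ) T, s t = b + ∫ τ in (0:ℝ)..t, s' τ) →
      (∀ t ∈ Set.Icc (0:ℝ) T, 0 ≤ s' t) →
      ContinuousOn (fun t : ℝ => t ^ (1 - α) * s' t) (Set.Icc 0 T) →
      (∀ t₁ ∈ Set.Ico (0:ℝ) T,
          Filter.Tendsto (fun t₂ => Q11 α s t₁ t₂)
            (nhdsWithin t₁ (Set.Ioc t₁ T)) (nhds 0)) ∧
        (∀ t ∈ Set.Ioc (0:ℝ) T, |Q11 α s 0 t| ≤ c₀ * (s t - s 0)) ∧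
        (∀ t₁ t₂ : ℝ, 0 ≤ t₁ → t₁ < t₂ → t₂ ≤ T →
          |Q12 α t₁ t₂| ≤ c₀ * |t₂ - t₁| ^ α) := by
  obtain ⟨c₀, hc₀, h⟩ := stmt_10_general α hα
  refine ⟨c₀, hc₀, fun T b hT _ s s' hint hs hs' hcont => ?_⟩
  obtain ⟨hQ11, hQ11_zero, hQ12⟩ := h T b s s' hint hs
  refine ⟨hQ11 (isCompact_Icc.exists_bound_of_continuousOn hcont), fun t ht => ?_,
    fun t₁ t₂ ht₁ ht _ => hQ12 t₁ t₂ ht₁ ht⟩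
  rw [← integral_abs_eq_sub_of_eq_add_integral hint hs hs' ⟨le_rfl, hT.le⟩ ⟨ht.1.le, ht.2⟩]
  exact hQ11_zero t ht
end
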